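/- Assume Φ(s) ≠ ∅ for every s ∈ L, and let K_r be a nonempty closed language with K_r ⊆ L_na = L ∩ (Σ \ Σ_c^a)*. Then there exists a supervisor S such that L_r(S^a/G) = inf CACO(K_r); in particular K_r ⊆ L_r(S^a/G), so the supervised system under cyber attacks always generates every string of the required language K_r. -/

import Mathlib

/-!
The infimum `I` of `CACO(Kr)` is itself a member of `CACO(Kr)`: each defining condition is
preserved by intersection (for observability, the witnesses `s'` lying in `I` lie in every member),
and the family is nonempty because it contains `L_na` (`lna_mem_caco`). The latter uses that
`Φ s` is nonempty, so that the premise of observability produces some string of `L_na` ending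
in `σ`, whence `σ` is not attackable.

Any `M ∈ CACO(Kr)` that contains the empty string is the small language of the supervisor
`enabling M`, which on observing `t` enables, besides the uncontrollable events, exactly the events
that continue within `M` some string of `M` that can be observed as `t`. Observability and
controllability of `M` bound the small language by `M`; conversely strings of `M` contain no
attackable events, so no attack on the control channel can disable them.
-/

/-- A language is (prefix-)closed if it contains every prefix of each of its strings. -/
def PrefixClosed {E : Type*} (K : Set (List E)) : Prop :=
  ∀ s ∈ K, ∀ t : List E, t <+: s → t ∈ K

/-- The set of possible attacked control commands obtained from `γ` by removing
and/or adding attackable controllable events in `Sca`. -/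
def AttackedControls {E : Type*} (Sca : Set E) (γ : Set E) : Set (Set E) :=
  {γa | ∃ γ' γ'' : Set E, γ' ⊆ Sca ∧ γ'' ⊆ Sca ∧ γa = (γ \ γ') ∪ γ''}

/-- The small language `L_r(S^a/G)`, defined recursively: `ε` belongs to it, and
`sσ` belongs to it iff `s` does, `sσ ∈ L`, and `σ` is uncontrollable or enabled
by every possible attacked control command. `Suc` is the set of uncontrollable
events and `Sca` the set of attackable controllable events. -/
inductive SmallLang {E : Type*} (L : Set (List E)) (Suc Sca : Set E)
    (Φ : List E → Set (List E)) (S : List E → Set E) : List E → Prop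
  | nil : SmallLang L Suc Sca Φ S []
  | snoc (s : List E) (σ : E) :
      SmallLang L Suc Sca Φ S s →
      s ++ [σ] ∈ L →
      (σ ∈ Suc ∨ ∀ t ∈ Φ s, ∀ γa ∈ AttackedControls Sca (S t), σ ∈ γa) →
      SmallLang L Suc Sca Φ S (s ++ [σ])

/-- `K` is CA-S-controllable w.r.t. `L`, uncontrollable events `Suc`, and
attackable controllable events `Sca`: `K·Suc ∩ L ⊆ K` and `K ⊆ (Σ \ Sca)*`. -/
def CASControllable {E : Type*} (L K : Set (List E)) (Suc Sca : Set E) : Prop :=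
  (∀ s ∈ K, ∀ σ ∈ Suc, s ++ [σ] ∈ L → s ++ [σ] ∈ K) ∧
  (∀ s ∈ K, ∀ σ ∈ s, σ ∉ Sca)

/-- `K` is CA-S-observable w.r.t. `L` and the observation attack map `Φ`. -/
def CASObservable {E : Type*} (L K : Set (List E)) (Φ : List E → Set (List E)) : Prop :=
  ∀ s ∈ K, ∀ σ : E,
    (s ++ [σ] ∈ L ∧ ∀ t ∈ Φ s, ∃ s' ∈ K, t ∈ Φ s' ∧ s' ++ [σ] ∈ K) →
    s ++ [σ] ∈ K

/-- The family of closed CA-S-controllable and CA-S-observable superlanguages of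
`Kr` contained in `L_na = L ∩ (Σ \ Sca)*`. -/
def CACO {E : Type*} (Sc Sca : Set E) (L : Set (List E))
    (Φ : List E → Set (List E)) (Kr : Set (List E)) : Set (Set (List E)) :=
  {M | PrefixClosed M ∧ Kr ⊆ M ∧ M ⊆ {s ∈ L | ∀ σ ∈ s, σ ∉ Sca} ∧
        CASControllable L M Scᶜ Sca ∧ CASObservable L M Φ}

/-- The supervisor that, on observing `t`, enables the uncontrollable events together with each
event that extends within `M` some string of `M` having `t` among its possible observations. -/
def enabling {E : Type*} (Suc : Set E) (Φ : List E → Set (List E)) (M : Set (List E))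
    (t : List E) : Set E :=
  Suc ∪ {σ | ∃ s' ∈ M, t ∈ Φ s' ∧ s' ++ [σ] ∈ M}

theorem lna_mem_caco {E : Type*} {Sc Sca : Set E} (hSca : Sca ⊆ Sc)
    {L : Set (List E)} (hLcl : PrefixClosed L)
    {Φ : List E → Set (List E)} (hΦ : ∀ s ∈ L, (Φ s).Nonempty)
    {Kr : Set (List E)} (hKr : Kr ⊆ {s ∈ L | ∀ σ ∈ s, σ ∉ Sca}) :
    {s ∈ L | ∀ σ ∈ s, σ ∉ Sca} ∈ CACO Sc Sca L Φ Kr := by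
  have snoc : ∀ s ∈ {s ∈ L | ∀ σ ∈ s, σ ∉ Sca}, ∀ σ, s ++ [σ] ∈ L → σ ∉ Sca →
      s ++ [σ] ∈ {s ∈ L | ∀ σ ∈ s, σ ∉ Sca} := by
    intro s hs σ hL hσ
    refine ⟨hL, fun τ hτ => ?_⟩
    rcases List.mem_append.1 hτ with h | h
    · exact hs.2 τ h
    · rwa [List.mem_singleton.1 h]
  refine ⟨fun s hs t ht => ⟨hLcl s hs.1 t ht, fun σ hσ => hs.2 σ (ht.subset hσ)⟩, hKr,
    subset_rfl, ⟨fun s hs σ hσ hL => snoc s hs σ hL fun h => hσ (hSca h), fun s hs => hs.2⟩, ?_⟩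
  rintro s hs σ ⟨hL, hobs⟩
  obtain ⟨t, ht⟩ := hΦ s hs.1
  obtain ⟨s', -, -, hs'⟩ := hobs t ht
  exact snoc s hs σ hL (hs'.2 σ (by simp))

theorem sInter_mem_caco {E : Type*} {Sc Sca : Set E} {L : Set (List E)}
    {Φ : List E → Set (List E)} {Kr : Set (List E)} (hne : (CACO Sc Sca L Φ Kr).Nonempty) :
    ⋂₀ (CACO Sc Sca L Φ Kr) ∈ CACO Sc Sca L Φ Kr := by
  obtain ⟨N, hN⟩ := hne
  refine ⟨fun s hs t ht M hM => hM.1 s (hs M hM) t ht, fun s hs M hM => hM.2.1 hs,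
    fun s hs => hN.2.2.1 (hs N hN),
    ⟨fun s hs σ hσ hL M hM => hM.2.2.2.1.1 s (hs M hM) σ hσ hL,
      fun s hs => hN.2.2.2.1.2 s (hs N hN)⟩, ?_⟩
  rintro s hs σ ⟨hL, hobs⟩ M hM
  refine hM.2.2.2.2 s (hs M hM) σ ⟨hL, fun t ht => ?_⟩
  obtain ⟨s', hs', hts', hs'σ⟩ := hobs t ht
  exact ⟨s', hs' M hM, hts', hs'σ M hM⟩

theorem smallLang_enabling {E : Type*} {Sc Sca : Set E} {L : Set (List E)}
    {Φ : List E → Set (List E)} {Kr M : Set (List E)} (hM : M ∈ CACO Sc Sca L Φ Kr)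
    (hnil : [] ∈ M) :
    {s | SmallLang L Scᶜ Sca Φ (enabling Scᶜ Φ M) s} = M := by
  obtain ⟨hcl, -, hsub, ⟨hctrl, hna⟩, hobs⟩ := hM
  ext s
  constructor
  · intro hs
    induction hs with
    | nil => exact hnil
    | snoc s σ _ hL hen ih =>
      by_cases hσ : σ ∈ Scᶜ
      · exact hctrl s ih σ hσ hL
      · refine hobs s ih σ ⟨hL, fun t ht => ?_⟩
        -- The trivial attack leaves the issued control command unchanged.
        have hmem : σ ∈ enabling Scᶜ Φ M t :=
          hen.resolve_left hσ t ht _ ⟨∅, ∅, Set.empty_subset _, Set.empty_subset _, by simp⟩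
        exact hmem.resolve_left hσ
  · intro hs
    induction s using List.reverseRecOn with
    | nil => exact .nil
    | append_singleton s σ ih =>
      have hsM : s ∈ M := hcl _ hs s (List.prefix_append s [σ])
      refine .snoc s σ (ih hsM) (hsub hs).1 (Or.inr ?_)
      rintro t ht _ ⟨γ', γ'', hγ', -, rfl⟩
      exact Or.inl ⟨Or.inr ⟨s, hsM, ht, hs⟩, fun h => hna _ hs σ (by simp) (hγ' h)⟩

/-- for `Kr ⊆ L_na`, there is a supervisor whose small language
equals `inf CACO(Kr)`; in particular its small language contains `Kr`. -/
theorem exists_supervisor_for_infimal_caco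
    {E : Type*} (Sc Sca : Set E) (hSca : Sca ⊆ Sc)
    (L : Set (List E)) (hLne : L.Nonempty) (hLcl : PrefixClosed L)
    (Φ : List E → Set (List E)) (hΦ : ∀ s ∈ L, (Φ s).Nonempty)
    (Kr : Set (List E)) (hKne : Kr.Nonempty) (hKcl : PrefixClosed Kr)
    (hKr : Kr ⊆ {s ∈ L | ∀ σ ∈ s, σ ∉ Sca}) :
    ∃ S : List E → Set E, (∀ t : List E, Scᶜ ⊆ S t) ∧
      {s | SmallLang L Scᶜ Sca Φ S s} = ⋂₀ (CACO Sc Sca L Φ Kr) ∧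
      Kr ⊆ {s | SmallLang L Scᶜ Sca Φ S s} := by
  have hI := sInter_mem_caco ⟨_, lna_mem_caco hSca hLcl hΦ hKr⟩
  obtain ⟨k, hk⟩ := hKne
  have heq := smallLang_enabling hI (hI.2.1 (hKcl k hk [] List.nil_prefix))
  exact ⟨_, fun _ => Set.subset_union_left, heq, heq.symm ▸ hI.2.1⟩
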